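/- Let n ≥ 2 and let V be an irreducible Harish-Chandra module for 𝔏_{S,n}(B) with non-uniformly bounded weight spaces. Then V is a highest weight 𝔏_{S,n}(B)-module: there exist β ∈ ℤ^n and a subgroup K of ℤ^n with ℤ^n = K ⊕ ℤβ, and a non-zero weight vector z ∈ V such that 𝔏_{S,n}(B)⁺·z = 0 (where 𝔏_{S,n}(B)⁺ = ⊕_{d∈ℕ}(𝔏_{S,n}(B))_{K+dβ}) and U(𝔏_{S,n}(B))·z = V. -/

import Mathlib

open scoped TensorProduct

noncomputable section

namespace LoopWitt

/-- The standard pairing `(u | m)` between `ℂⁿ` and `ℤⁿ`. -/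
def pairC {n : ℕ} (u : Fin n → ℂ) (m : Fin n → ℤ) : ℂ := ∑ i, u i * (m i : ℂ)

/-- The standard pairing on `ℂⁿ`. -/
def pairCC {n : ℕ} (u lam : Fin n → ℂ) : ℂ := ∑ i, u i * lam i

/-- `ℤⁿ = K ⊕ ℤβ`. -/
def IsDirectSumDecomp {n : ℕ} (K : AddSubgroup (Fin n → ℤ)) (β : Fin n → ℤ) : Prop :=
  (∀ m : Fin n → ℤ, ∃ a ∈ K, ∃ d : ℤ, m = a + d • β) ∧ ∀ d : ℤ, d • β ∈ K → d = 0

/-- `r` lies in the positive part `K + ℕ₊ β` of `ℤⁿ`. -/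
def posDeg {n : ℕ} (K : AddSubgroup (Fin n → ℤ)) (β : Fin n → ℤ) (r : Fin n → ℤ) : Prop :=
  ∃ a ∈ K, ∃ d : ℤ, 1 ≤ d ∧ r = a + d • β

/-- A representation of the loop Witt algebra `Wₙ ⊗ B`, given by operators
`D u r b` (for `D(u,r) ⊗ b`, where `D(u,r) = Σ uᵢ tʳ dᵢ`), bilinear in `u` and `b`,
subject to the Witt bracket relations. -/
structure WittRep (n : ℕ) (B : Type*) [CommRing B] [Algebra ℂ B]
    (V : Type*) [AddCommGroup V] [Module ℂ V] where
  D : (Fin n → ℂ) → (Fin n → ℤ) → B → Module.End ℂ V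
  D_add_u : ∀ u u' r b, D (u + u') r b = D u r b + D u' r b
  D_smul_u : ∀ (c : ℂ) u r b, D (c • u) r b = c • D u r b
  D_add_b : ∀ u r b b', D u r (b + b') = D u r b + D u r b'
  D_smul_b : ∀ (c : ℂ) u r b, D u r (c • b) = c • D u r b
  comm_DD : ∀ u r b v s b',
    ⁅D u r b, D v s b'⁆ = D (pairC u s • v - pairC v r • u) (r + s) (b * b')

namespace WittRep

variable {n : ℕ} {B : Type*} [CommRing B] [Algebra ℂ B]
  {V : Type*} [AddCommGroup V] [Module ℂ V]

/-- The weight space of weight `lam` with respect to the Cartan subalgebra `H = ⊕ ℂ dᵢ`. -/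
def weightSpace (ρ : WittRep n B V) (lam : Fin n → ℂ) : Submodule ℂ V where
  carrier := {x | ∀ u, ρ.D u 0 1 x = pairCC u lam • x}
  add_mem' := by
    intro a b ha hb u
    rw [map_add, ha u, hb u, smul_add]
  zero_mem' := by intro u; simp
  smul_mem' := by
    intro c a ha u
    rw [map_smul, ha u, smul_comm]

/-- A weight module: the sum of the weight spaces is everything. -/
def IsWeightModule (ρ : WittRep n B V) : Prop :=
  (⨆ lam : Fin n → ℂ, ρ.weightSpace lam) = ⊤

/-- Uniformly bounded weight spaces. -/
def UniformlyBounded (ρ : WittRep n B V) : Prop :=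
  ∃ N : ℕ, ∀ lam, Module.rank ℂ ↥(ρ.weightSpace lam) ≤ (N : Cardinal)

/-- A Harish-Chandra module: a weight module with finite dimensional weight spaces. -/
def HarishChandra (ρ : WittRep n B V) : Prop :=
  ρ.IsWeightModule ∧ ∀ lam, FiniteDimensional ℂ ↥(ρ.weightSpace lam)

/-- A submodule invariant under all the operators. -/
def Invariant (ρ : WittRep n B V) (U : Submodule ℂ V) : Prop :=
  ∀ u r b, ∀ x ∈ U, ρ.D u r b x ∈ U

/-- Irreducibility. -/
def IsIrreducible (ρ : WittRep n B V) : Prop :=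
  (∃ x : V, x ≠ 0) ∧ ∀ U : Submodule ℂ V, ρ.Invariant U → U = ⊥ ∨ U = ⊤

/-- A single point evaluation module. -/
def IsSinglePointEval (ρ : WittRep n B V) : Prop :=
  ∃ η : B →ₐ[ℂ] ℂ, ∀ u r b, ρ.D u r b = η b • ρ.D u r 1

/-- Nontriviality of the action. -/
def IsNontrivial (ρ : WittRep n B V) : Prop := ∃ u r b x, ρ.D u r b x ≠ 0

/-- `z` is a highest weight vector generating the module, with respect to the
triangular decomposition determined by `ℤⁿ = K ⊕ ℤβ`. -/
def IsHWVector (ρ : WittRep n B V) (K : AddSubgroup (Fin n → ℤ)) (β : Fin n → ℤ)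
    (z : V) : Prop :=
  z ≠ 0 ∧ (∃ lam, z ∈ ρ.weightSpace lam) ∧
  (∀ u r b, posDeg K β r → ρ.D u r b z = 0) ∧
  ∀ U : Submodule ℂ V, ρ.Invariant U → z ∈ U → U = ⊤

/-- A highest weight module. -/
def IsHighestWeight (ρ : WittRep n B V) : Prop :=
  ∃ (K : AddSubgroup (Fin n → ℤ)) (β : Fin n → ℤ),
    IsDirectSumDecomp K β ∧ ∃ z, ρ.IsHWVector K β z

end WittRep

/-- A representation of the loop extended Witt algebra `𝔏_{S,n}(B) = (Wₙ ⋉ (S ⊗ Aₙ)) ⊗ B`,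
given by operators `D u r b` (for `D(u,r) ⊗ b`) and `E s m b` (for `s ⊗ tᵐ ⊗ b`),
suitably multilinear, subject to the bracket relations of `𝔏_{S,n}(B)`. -/
structure ExtWittRep (n : ℕ) (S : Type*) [AddCommGroup S] [Module ℂ S]
    (B : Type*) [CommRing B] [Algebra ℂ B]
    (V : Type*) [AddCommGroup V] [Module ℂ V] where
  D : (Fin n → ℂ) → (Fin n → ℤ) → B → Module.End ℂ V
  E : S → (Fin n → ℤ) → B → Module.End ℂ V
  D_add_u : ∀ u u' r b, D (u + u') r b = D u r b + D u' r b
  D_smul_u : ∀ (c : ℂ) u r b, D (c • u) r b = c • D u r b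
  D_add_b : ∀ u r b b', D u r (b + b') = D u r b + D u r b'
  D_smul_b : ∀ (c : ℂ) u r b, D u r (c • b) = c • D u r b
  E_add_s : ∀ s s' m b, E (s + s') m b = E s m b + E s' m b
  E_smul_s : ∀ (c : ℂ) s m b, E (c • s) m b = c • E s m b
  E_add_b : ∀ s m b b', E s m (b + b') = E s m b + E s m b'
  E_smul_b : ∀ (c : ℂ) s m b, E s m (c • b) = c • E s m b
  comm_DD : ∀ u r b v s b',
    ⁅D u r b, D v s b'⁆ = D (pairC u s • v - pairC v r • u) (r + s) (b * b')
  comm_DE : ∀ u r b s m b', ⁅D u r b, E s m b'⁆ = pairC u m • E s (m + r) (b * b')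
  comm_EE : ∀ s m b s' m' b', ⁅E s m b, E s' m' b'⁆ = 0

namespace ExtWittRep

variable {n : ℕ} {S : Type*} [AddCommGroup S] [Module ℂ S]
  {B : Type*} [CommRing B] [Algebra ℂ B]
  {V : Type*} [AddCommGroup V] [Module ℂ V]

/-- The weight space of the weight given by `lam` on `H` and the linear functional `c`
on `S ≅ S ⊗ t⁰ (⊗ 1)`, with respect to the Cartan subalgebra `H ⊕ (S ⊗ t⁰) (⊗ 1)`. -/
def weightSpace (ρ : ExtWittRep n S B V) (lam : Fin n → ℂ) (c : S →ₗ[ℂ] ℂ) :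
    Submodule ℂ V where
  carrier := {x | (∀ u, ρ.D u 0 1 x = pairCC u lam • x) ∧ ∀ s, ρ.E s 0 1 x = c s • x}
  add_mem' := by
    intro a b ha hb
    refine ⟨fun u => ?_, fun s => ?_⟩
    · rw [map_add, ha.1 u, hb.1 u, smul_add]
    · rw [map_add, ha.2 s, hb.2 s, smul_add]
  zero_mem' := by exact ⟨fun u => by simp, fun s => by simp⟩
  smul_mem' := by
    intro t a ha
    refine ⟨fun u => ?_, fun s => ?_⟩
    · rw [map_smul, ha.1 u, smul_comm]
    · rw [map_smul, ha.2 s, smul_comm]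

/-- A weight module: the weight spaces span. -/
def IsWeightModule (ρ : ExtWittRep n S B V) : Prop :=
  (⨆ p : (Fin n → ℂ) × (S →ₗ[ℂ] ℂ), ρ.weightSpace p.1 p.2) = ⊤

/-- Uniformly bounded weight spaces. -/
def UniformlyBounded (ρ : ExtWittRep n S B V) : Prop :=
  ∃ N : ℕ, ∀ lam c, Module.rank ℂ ↥(ρ.weightSpace lam c) ≤ (N : Cardinal)

/-- Harish-Chandra: a weight module with finite dimensional weight spaces. -/
def HarishChandra (ρ : ExtWittRep n S B V) : Prop :=
  ρ.IsWeightModule ∧ ∀ lam c, FiniteDimensional ℂ ↥(ρ.weightSpace lam c)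

/-- Invariant submodule. -/
def Invariant (ρ : ExtWittRep n S B V) (U : Submodule ℂ V) : Prop :=
  (∀ u r b, ∀ x ∈ U, ρ.D u r b x ∈ U) ∧ (∀ s m b, ∀ x ∈ U, ρ.E s m b x ∈ U)

/-- Irreducibility. -/
def IsIrreducible (ρ : ExtWittRep n S B V) : Prop :=
  (∃ x : V, x ≠ 0) ∧ ∀ U : Submodule ℂ V, ρ.Invariant U → U = ⊥ ∨ U = ⊤

/-- A single point evaluation module. -/
def IsSinglePointEval (ρ : ExtWittRep n S B V) : Prop :=
  ∃ η : B →ₐ[ℂ] ℂ, (∀ u r b, ρ.D u r b = η b • ρ.D u r 1) ∧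
    ∀ s m b, ρ.E s m b = η b • ρ.E s m 1

/-- Single point generalised evaluation module: the action factors through
`𝔤 ⊗ B/𝔪ᵏ` for some maximal ideal `𝔪` and some `k`. -/
def IsGenEval (ρ : ExtWittRep n S B V) : Prop :=
  ∃ 𝔪 : Ideal B, 𝔪.IsMaximal ∧ ∃ k : ℕ, ∀ b ∈ 𝔪 ^ k,
    (∀ u r, ρ.D u r b = 0) ∧ ∀ s m, ρ.E s m b = 0

/-- Nontriviality of the action. -/
def IsNontrivial (ρ : ExtWittRep n S B V) : Prop :=
  (∃ u r b x, ρ.D u r b x ≠ 0) ∨ ∃ s m b x, ρ.E s m b x ≠ 0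

/-- The submodule of vectors on which the whole Lie algebra acts trivially. -/
def trivVectors (ρ : ExtWittRep n S B V) : Submodule ℂ V where
  carrier := {x | (∀ u r b, ρ.D u r b x = 0) ∧ ∀ s m b, ρ.E s m b x = 0}
  add_mem' := by
    intro a b ha hb
    exact ⟨fun u r c => by rw [map_add, ha.1 u r c, hb.1 u r c, add_zero],
      fun s m c => by rw [map_add, ha.2 s m c, hb.2 s m c, add_zero]⟩
  zero_mem' := ⟨fun u r c => by simp, fun s m c => by simp⟩
  smul_mem' := by
    intro t a ha
    exact ⟨fun u r c => by rw [map_smul, ha.1 u r c, smul_zero],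
      fun s m c => by rw [map_smul, ha.2 s m c, smul_zero]⟩

/-- Highest weight vector for the triangular decomposition determined by `ℤⁿ = K ⊕ ℤβ`,
generating the whole module. -/
def IsHWVector (ρ : ExtWittRep n S B V) (K : AddSubgroup (Fin n → ℤ)) (β : Fin n → ℤ)
    (z : V) : Prop :=
  z ≠ 0 ∧ (∃ lam c, z ∈ ρ.weightSpace lam c) ∧
  (∀ u r b, posDeg K β r → ρ.D u r b z = 0) ∧
  (∀ s m b, posDeg K β m → ρ.E s m b z = 0) ∧
  ∀ U : Submodule ℂ V, ρ.Invariant U → z ∈ U → U = ⊤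

/-- Highest weight module. -/
def IsHighestWeight (ρ : ExtWittRep n S B V) : Prop :=
  ∃ (K : AddSubgroup (Fin n → ℤ)) (β : Fin n → ℤ),
    IsDirectSumDecomp K β ∧ ∃ z, ρ.IsHWVector K β z

/-- Invariance under the degree-`K` part `(𝔏_{S,n}(B))_K`. -/
def InvariantK (ρ : ExtWittRep n S B V) (K : AddSubgroup (Fin n → ℤ))
    (U : Submodule ℂ V) : Prop :=
  (∀ u, ∀ r ∈ K, ∀ b, ∀ x ∈ U, ρ.D u r b x ∈ U) ∧
    ∀ s, ∀ m ∈ K, ∀ b, ∀ x ∈ U, ρ.E s m b x ∈ U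

/-- The highest weight space: the `(𝔏_{S,n}(B))_K`-submodule generated by `z`. -/
def hwSpace (ρ : ExtWittRep n S B V) (K : AddSubgroup (Fin n → ℤ)) (z : V) :
    Submodule ℂ V :=
  sInf {U : Submodule ℂ V | z ∈ U ∧ ρ.InvariantK K U}

end ExtWittRep

end LoopWitt

open LoopWitt


namespace LoopWitt

section Pairing

variable {n : ℕ}

lemma pairC_add_right (u : Fin n → ℂ) (p q : Fin n → ℤ) :
    pairC u (p + q) = pairC u p + pairC u q := by
  simp [pairC, mul_add, Finset.sum_add_distrib]

lemma pairC_zsmul_right (u : Fin n → ℂ) (k : ℤ) (p : Fin n → ℤ) :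
    pairC u (k • p) = k * pairC u p := by
  simp only [pairC, Finset.mul_sum, Pi.smul_apply, smul_eq_mul, Int.cast_mul]
  exact Finset.sum_congr rfl fun i _ => by ring

lemma pairC_neg_right (u : Fin n → ℂ) (p : Fin n → ℤ) : pairC u (-p) = -pairC u p := by
  simp [pairC]

lemma pairC_sub_right (u : Fin n → ℂ) (p q : Fin n → ℤ) :
    pairC u (p - q) = pairC u p - pairC u q := by
  rw [sub_eq_add_neg, pairC_add_right, pairC_neg_right, sub_eq_add_neg]

@[simp] lemma pairC_zero_right (u : Fin n → ℂ) : pairC u 0 = 0 := by simp [pairC]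

lemma pairC_add_left (u v : Fin n → ℂ) (p : Fin n → ℤ) :
    pairC (u + v) p = pairC u p + pairC v p := by
  simp [pairC, add_mul, Finset.sum_add_distrib]

lemma pairC_smul_left (c : ℂ) (u : Fin n → ℂ) (p : Fin n → ℤ) :
    pairC (c • u) p = c * pairC u p := by
  simp [pairC, Finset.mul_sum, mul_assoc]

/-- Some vector pairs to a nonzero number with every nonzero lattice point. -/
lemma exists_generic (n : ℕ) :
    ∃ u : Fin n → ℂ, ∀ q : Fin n → ℤ, q ≠ 0 → pairC u q ≠ 0 := by
  obtain ⟨x, hx⟩ : ∃ x : ℂ, Transcendental ℤ x := by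
    refine ⟨((liouvilleNumber ((2 : ℕ) : ℝ) : ℝ) : ℂ), ?_⟩
    have h := transcendental_liouvilleNumber (m := 2) le_rfl
    exact (transcendental_algebraMap_iff (R := ℤ) (S := ℝ) (A := ℂ)
      (algebraMap ℝ ℂ).injective).2 h
  refine ⟨fun i => x ^ (i : ℕ), fun q hq h0 => hq ?_⟩
  have hp : (∑ i : Fin n, Polynomial.monomial (i : ℕ) (q i) : Polynomial ℤ) = 0 := by
    by_contra hne
    refine hx ⟨_, hne, ?_⟩
    rw [map_sum, ← h0, pairC]
    refine Finset.sum_congr rfl fun i _ => ?_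
    rw [Polynomial.aeval_monomial, eq_intCast, mul_comm]
  funext i
  have := congrArg (fun p => Polynomial.coeff p (i : ℕ)) hp
  simpa [Polynomial.finsetSum_coeff, Polynomial.coeff_monomial, Fin.val_inj] using this

/-- A vector orthogonal to a given lattice point. -/
lemma exists_orthogonal (hn : 2 ≤ n) (r : Fin n → ℤ) :
    ∃ w : Fin n → ℂ, w ≠ 0 ∧ pairC w r = 0 := by
  let i₀ : Fin n := ⟨0, by omega⟩
  let i₁ : Fin n := ⟨1, by omega⟩
  have hne : i₁ ≠ i₀ := by simp [i₀, i₁, Fin.ext_iff]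
  by_cases h : r i₀ = 0
  · refine ⟨Pi.single i₀ 1, by simp, ?_⟩
    simp [pairC, Pi.single_apply, h]
  · refine ⟨Pi.single i₀ (-(r i₁ : ℂ)) + Pi.single i₁ (r i₀ : ℂ), fun h0 => h ?_, ?_⟩
    · have := congrFun h0 i₁
      simpa [hne] using this
    · rw [pairC_add_left]
      simp [pairC, Pi.single_apply]
      ring

end Pairing

namespace ExtWittRep

variable {n : ℕ} {S : Type*} [AddCommGroup S] [Module ℂ S]
  {B : Type*} [CommRing B] [Algebra ℂ B]
  {V : Type*} [AddCommGroup V] [Module ℂ V] (ρ : ExtWittRep n S B V)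

section Relations

lemma D_D (u : Fin n → ℂ) (r : Fin n → ℤ) (b : B) (v : Fin n → ℂ) (s : Fin n → ℤ) (b' : B)
    (x : V) : ρ.D u r b (ρ.D v s b' x) =
      ρ.D v s b' (ρ.D u r b x) + ρ.D (pairC u s • v - pairC v r • u) (r + s) (b * b') x := by
  rw [← ρ.comm_DD]
  simp [LieRing.of_associative_ring_bracket]

lemma D_E (u : Fin n → ℂ) (r : Fin n → ℤ) (b : B) (s : S) (m : Fin n → ℤ) (b' : B) (x : V) :
    ρ.D u r b (ρ.E s m b' x) =
      ρ.E s m b' (ρ.D u r b x) + pairC u m • ρ.E s (m + r) (b * b') x := by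
  rw [← LinearMap.smul_apply, ← ρ.comm_DE]
  simp [LieRing.of_associative_ring_bracket]

lemma E_E (s : S) (m : Fin n → ℤ) (b : B) (s' : S) (m' : Fin n → ℤ) (b' : B) (x : V) :
    ρ.E s m b (ρ.E s' m' b' x) = ρ.E s' m' b' (ρ.E s m b x) := by
  have := congrArg (fun f => f x) (ρ.comm_EE s m b s' m' b')
  simpa [LieRing.of_associative_ring_bracket, sub_eq_zero] using this

/-- The operators `D u r b`, linear in `u`. -/
def DLin (r : Fin n → ℤ) (b : B) : (Fin n → ℂ) →ₗ[ℂ] Module.End ℂ V where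
  toFun u := ρ.D u r b
  map_add' u u' := ρ.D_add_u u u' r b
  map_smul' c u := ρ.D_smul_u c u r b

/-- The operators `E s r b`, linear in `s`. -/
def ELin (r : Fin n → ℤ) (b : B) : S →ₗ[ℂ] Module.End ℂ V where
  toFun s := ρ.E s r b
  map_add' s s' := ρ.E_add_s s s' r b
  map_smul' c s := ρ.E_smul_s c s r b

end Relations

section Annihilation

/-- All operators of degree `q` with coefficient `b` annihilate `v`. -/
def Kills (v : V) (b : B) (q : Fin n → ℤ) : Prop :=
  (∀ u, ρ.D u q b v = 0) ∧ ∀ s, ρ.E s q b v = 0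

variable {ρ}

lemma Kills.add_coeff {v : V} {b b' : B} {q : Fin n → ℤ} (h : ρ.Kills v b q)
    (h' : ρ.Kills v b' q) : ρ.Kills v (b + b') q :=
  ⟨fun u => by rw [ρ.D_add_b, LinearMap.add_apply, h.1, h'.1, add_zero],
    fun s => by rw [ρ.E_add_b, LinearMap.add_apply, h.2, h'.2, add_zero]⟩

lemma Kills.smul_coeff {v : V} {b : B} {q : Fin n → ℤ} (h : ρ.Kills v b q) (c : ℂ) :
    ρ.Kills v (c • b) q :=
  ⟨fun u => by rw [ρ.D_smul_b, LinearMap.smul_apply, h.1, smul_zero],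
    fun s => by rw [ρ.E_smul_b, LinearMap.smul_apply, h.2, smul_zero]⟩

lemma Kills.add_vec {v v' : V} {b : B} {q : Fin n → ℤ} (h : ρ.Kills v b q)
    (h' : ρ.Kills v' b q) : ρ.Kills (v + v') b q :=
  ⟨fun u => by rw [map_add, h.1, h'.1, add_zero],
    fun s => by rw [map_add, h.2, h'.2, add_zero]⟩

lemma Kills.smul_vec {v : V} {b : B} {q : Fin n → ℤ} (h : ρ.Kills v b q) (c : ℂ) :
    ρ.Kills (c • v) b q :=
  ⟨fun u => by rw [map_smul, h.1, smul_zero], fun s => by rw [map_smul, h.2, smul_zero]⟩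

lemma kills_zero (b : B) (q : Fin n → ℤ) : ρ.Kills 0 b q :=
  ⟨fun _ => map_zero _, fun _ => map_zero _⟩

/-- Bracketing a single annihilating operator of degree `q₁` with all operators of degree `q₂`
yields all operators of degree `q₁ + q₂`. -/
lemma Kills.add_of_single {v : V} {b₁ b₂ : B} {q₁ q₂ : Fin n → ℤ} {u : Fin n → ℂ}
    (h₁ : ρ.D u q₁ b₁ v = 0) (h₂ : ρ.Kills v b₂ q₂) (hq : pairC u q₂ ≠ 0)
    (hqq : pairC u (q₂ - q₁) ≠ 0) : ρ.Kills v (b₁ * b₂) (q₁ + q₂) := by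
  refine ⟨fun y => ?_, fun s => ?_⟩
  · set c : ℂ := pairC y q₁ / pairC u (q₂ - q₁) with hc
    set w : Fin n → ℂ := (pairC u q₂)⁻¹ • (y + c • u) with hw
    have hwq : pairC w q₁ = c := by
      rw [hw, pairC_smul_left, pairC_add_left, pairC_smul_left, inv_mul_eq_iff_eq_mul₀ hq]
      rw [pairC_sub_right] at hqq hc
      rw [hc]
      field_simp
      ring
    have hy : pairC u q₂ • w - pairC w q₁ • u = y := by
      rw [hwq, hw, smul_inv_smul₀ hq, add_sub_cancel_right]
    have := ρ.D_D u q₁ b₁ w q₂ b₂ v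
    rw [h₂.1, h₁, map_zero, map_zero, zero_add, hy] at this
    exact this.symm
  · have := ρ.D_E u q₁ b₁ s q₂ b₂ v
    rw [h₂.2, h₁, map_zero, map_zero, zero_add] at this
    rw [add_comm]
    exact (smul_eq_zero.1 this.symm).resolve_left hq

lemma Kills.add {u₀ : Fin n → ℂ} (hu : ∀ q : Fin n → ℤ, q ≠ 0 → pairC u₀ q ≠ 0)
    {v : V} {b₁ b₂ : B} {q₁ q₂ : Fin n → ℤ}
    (h₁ : ρ.Kills v b₁ q₁) (h₂ : ρ.Kills v b₂ q₂) (hq : q₂ ≠ 0) (hqq : q₁ ≠ q₂) :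
    ρ.Kills v (b₁ * b₂) (q₁ + q₂) :=
  Kills.add_of_single (h₁.1 u₀) h₂ (hu _ hq) (hu _ (sub_ne_zero.2 hqq.symm))

variable (ρ)

/-- No nonzero vector is annihilated by the whole Lie algebra. -/
def NoInvariants : Prop := ∀ v : V, (∀ b q, ρ.Kills v b q) → v = 0

variable {ρ}

lemma noInvariants_of_not_uniformlyBounded (hirr : ρ.IsIrreducible)
    (hnub : ¬ ρ.UniformlyBounded) : ρ.NoInvariants := by
  intro v hv
  by_contra hne
  have hinv : ρ.Invariant (Submodule.span ℂ {v}) := by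
    refine ⟨fun u r b x hx => ?_, fun s m b x hx => ?_⟩ <;>
    obtain ⟨c, rfl⟩ := Submodule.mem_span_singleton.1 hx
    · rw [map_smul, (hv b r).1, smul_zero]; exact zero_mem _
    · rw [map_smul, (hv b m).2, smul_zero]; exact zero_mem _
  rcases hirr.2 _ hinv with h | h
  · exact hne (Submodule.span_singleton_eq_bot.1 h)
  · refine hnub ⟨1, fun lam c => ?_⟩
    have h1 : Module.rank ℂ V ≤ 1 := by
      rw [← rank_top ℂ V, ← h]
      exact (rank_span_le _).trans (by simp)
    exact (Submodule.rank_le _).trans (by simpa using h1)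

end Annihilation

section Cone

/-- The sup-norm of `ε` is at most `j`. -/
def InBox (ε : Fin n → ℤ) (j : ℤ) : Prop := ∀ i, |ε i| ≤ j

lemma InBox.mono {ε : Fin n → ℤ} {j j' : ℤ} (h : InBox ε j) (hj : j ≤ j') : InBox ε j' :=
  fun i => (h i).trans hj

lemma InBox.add {ε ε' : Fin n → ℤ} {j j' : ℤ} (h : InBox ε j) (h' : InBox ε' j') :
    InBox (ε + ε') (j + j') :=
  fun i => (abs_add_le _ _).trans (add_le_add (h i) (h' i))

lemma InBox.neg {ε : Fin n → ℤ} {j : ℤ} (h : InBox ε j) : InBox (-ε) j :=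
  fun i => by simpa using h i

lemma InBox.smul {ε : Fin n → ℤ} {j : ℤ} (h : InBox ε j) (k : ℕ) :
    InBox ((k : ℤ) • ε) (k * j) := fun i => by
  rw [Pi.smul_apply, smul_eq_mul, abs_mul, Nat.abs_cast]
  exact mul_le_mul_of_nonneg_left (h i) (by positivity)

lemma inBox_zero {j : ℤ} (hj : 0 ≤ j) : InBox (0 : Fin n → ℤ) j := fun i => by simpa using hj

lemma inBox_single (i : Fin n) : InBox (Pi.single i 1 : Fin n → ℤ) 1 := fun k => by
  by_cases h : k = i
  · subst h; simp
  · simp [h]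

lemma exists_inBox (ε : Fin n → ℤ) : ∃ σ : ℕ, InBox ε σ := by
  refine ⟨∑ i, (ε i).natAbs, fun i => ?_⟩
  rw [Int.abs_eq_natAbs]
  exact_mod_cast Finset.single_le_sum (f := fun i => (ε i).natAbs) (fun _ _ => Nat.zero_le _)
    (Finset.mem_univ i)

variable {ρ}

lemma Kills.apply_D {x : V} {b b' : B} {q s : Fin n → ℤ} (h : ρ.Kills x b q)
    (h' : ρ.Kills x (b * b') (q + s)) (w : Fin n → ℂ) : ρ.Kills (ρ.D w s b' x) b q := by
  refine ⟨fun u => ?_, fun t => ?_⟩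
  · rw [ρ.D_D, h.1, h'.1, map_zero, add_zero]
  · have := ρ.D_E w s b' t q b x
    rwa [h.2, mul_comm, h'.2, map_zero, smul_zero, add_zero, eq_comm] at this

lemma Kills.apply_E {x : V} {b b' : B} {q s : Fin n → ℤ} (h : ρ.Kills x b q)
    (h' : ρ.Kills x (b * b') (q + s)) (t : S) : ρ.Kills (ρ.E t s b' x) b q := by
  refine ⟨fun u => ?_, fun t' => ?_⟩
  · rw [ρ.D_E, h.1, add_comm s q, h'.2, map_zero, smul_zero, add_zero]
  · rw [ρ.E_E, h.2, map_zero]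

variable (ρ)

/-- `r` lies in the open cone of directions in which every vector is annihilated by all
sufficiently deep operators. -/
def Cone (r : Fin n → ℤ) : Prop :=
  ∃ k : ℕ, 1 ≤ k ∧ ∀ (v : V) (b : B), ∃ R : ℕ, ∀ j : ℕ, R ≤ j → ∀ ε : Fin n → ℤ,
    InBox ε j → ρ.Kills v b ((j * k : ℤ) • r + ε)

variable {ρ}

/-- By irreducibility, it suffices to test a cone direction on a single nonzero vector. -/
lemma cone_of_vector (hirr : ρ.IsIrreducible) {r : Fin n → ℤ} {k : ℕ} (hk : 1 ≤ k) {v : V}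
    (hv : v ≠ 0) (h : ∀ b : B, ∃ R : ℕ, ∀ j : ℕ, R ≤ j → ∀ ε : Fin n → ℤ,
      InBox ε j → ρ.Kills v b ((j * k : ℤ) • r + ε)) : ρ.Cone r := by
  let U : Submodule ℂ V :=
    { carrier := {x | ∀ (b : B) (σ : ℕ), ∃ R : ℕ, ∀ j : ℕ, R ≤ j → ∀ ε : Fin n → ℤ,
        InBox ε (j + σ) → ρ.Kills x b ((j * (2 * k) : ℤ) • r + ε)}
      add_mem' := by
        intro x y hx hy b σ
        obtain ⟨R, hR⟩ := hx b σ
        obtain ⟨R', hR'⟩ := hy b σ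
        exact ⟨max R R', fun j hj ε hε =>
          (hR j (le_of_max_le_left hj) ε hε).add_vec (hR' j (le_of_max_le_right hj) ε hε)⟩
      zero_mem' := fun b σ => ⟨0, fun j _ ε _ => kills_zero _ _⟩
      smul_mem' := by
        intro c x hx b σ
        obtain ⟨R, hR⟩ := hx b σ
        exact ⟨R, fun j hj ε hε => (hR j hj ε hε).smul_vec c⟩ }
  have key : ∀ x ∈ U, ∀ (s : Fin n → ℤ) (b b' : B) (σ : ℕ), ∃ R : ℕ, ∀ j : ℕ, R ≤ j →
      ∀ ε : Fin n → ℤ, InBox ε (j + σ) → ρ.Kills x b ((j * (2 * k) : ℤ) • r + ε) ∧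
        ρ.Kills x (b * b') ((j * (2 * k) : ℤ) • r + ε + s) := by
    intro x hx s b b' σ
    obtain ⟨τ, hτ⟩ := exists_inBox s
    obtain ⟨R, hR⟩ := hx b σ
    obtain ⟨R', hR'⟩ := hx (b * b') (σ + τ)
    refine ⟨max R R', fun j hj ε hε => ⟨hR j (le_of_max_le_left hj) ε hε, ?_⟩⟩
    rw [add_assoc]
    refine hR' j (le_of_max_le_right hj) _ ?_
    convert hε.add hτ using 1
    push_cast
    ring
  have hU : ρ.Invariant U := by
    refine ⟨fun u r' b' x hx b σ => ?_, fun s r' b' x hx b σ => ?_⟩ <;>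
    obtain ⟨R, hR⟩ := key x hx r' b b' σ
    · exact ⟨R, fun j hj ε hε => (hR j hj ε hε).1.apply_D (hR j hj ε hε).2 u⟩
    · exact ⟨R, fun j hj ε hε => (hR j hj ε hε).1.apply_E (hR j hj ε hε).2 s⟩
  have hvU : v ∈ U := by
    intro b σ
    obtain ⟨R, hR⟩ := h b
    refine ⟨max R σ, fun j hj ε hε => ?_⟩
    have := hR (2 * j) (by omega) ε (hε.mono (by push_cast; omega))
    convert this using 3
    push_cast
    ring
  have htop : U = ⊤ := (hirr.2 U hU).resolve_left fun h0 => hv (by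
    rw [h0] at hvU
    exact (Submodule.mem_bot ℂ).1 hvU)
  refine ⟨2 * k, by omega, fun x b => ?_⟩
  have hx : x ∈ U := htop ▸ Submodule.mem_top
  obtain ⟨R, hR⟩ := hx b 0
  refine ⟨R, fun j hj ε hε => ?_⟩
  simpa using hR j hj ε (by simpa using hε)

lemma Cone.of_smul {r : Fin n → ℤ} {l : ℕ} (hl : 1 ≤ l) (h : ρ.Cone ((l : ℤ) • r)) :
    ρ.Cone r := by
  obtain ⟨k, hk, h⟩ := h
  refine ⟨k * l, Nat.mul_pos hk hl, fun v b => ?_⟩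
  obtain ⟨R, hR⟩ := h v b
  refine ⟨R, fun j hj ε hε => ?_⟩
  convert hR j hj ε hε using 2
  rw [smul_smul]
  congr 1
  push_cast
  ring

/-- The cone is open. -/
lemma Cone.exists_box {r : Fin n → ℤ} (h : ρ.Cone r) :
    ∃ k : ℕ, 1 ≤ k ∧ ∀ j : ℕ, 1 ≤ j → ∀ ε : Fin n → ℤ, InBox ε j →
      ρ.Cone ((j * k : ℤ) • r + ε) := by
  obtain ⟨k, hk, h⟩ := h
  refine ⟨2 * k, by omega, fun j hj ε hε => ⟨1, le_rfl, fun v b => ?_⟩⟩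
  obtain ⟨R, hR⟩ := h v b
  refine ⟨R, fun i hi ε' hε' => ?_⟩
  have h1 : i ≤ i * j := Nat.le_mul_of_pos_right i hj
  have := hR (2 * (i * j)) (by omega) ((i : ℤ) • ε + ε')
    (((hε.smul i).add hε').mono (by push_cast; norm_cast; omega))
  convert this using 1
  push_cast
  module

lemma Cone.exists_nsmul_add {r : Fin n → ℤ} (h : ρ.Cone r) (s : Fin n → ℤ) :
    ∃ N : ℕ, 1 ≤ N ∧ ρ.Cone ((N : ℤ) • r + s) := by
  obtain ⟨k, hk, h⟩ := h.exists_box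
  obtain ⟨σ, hσ⟩ := exists_inBox s
  refine ⟨(σ + 1) * k, Nat.mul_pos (by omega) hk, ?_⟩
  have := h (σ + 1) (by omega) s (hσ.mono (by push_cast; omega))
  simpa using this

lemma not_cone_zero (hirr : ρ.IsIrreducible) (hni : ρ.NoInvariants) : ¬ ρ.Cone 0 := by
  rintro ⟨k, hk, h⟩
  obtain ⟨x, hx⟩ := hirr.1
  refine hx (hni x fun b q => ?_)
  obtain ⟨σ, hσ⟩ := exists_inBox q
  obtain ⟨R, hR⟩ := h x b
  have := hR (max R σ) (le_max_left _ _) q (hσ.mono (by exact_mod_cast le_max_right _ _))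
  simpa using this

/-- Of the three multiples `-1, 0, 1` of a basis vector, one avoids two prescribed values. -/
lemma exists_inBox_ne (hn : 0 < n) (p q : Fin n → ℤ) :
    ∃ η : Fin n → ℤ, InBox η 1 ∧ η ≠ p ∧ η + η ≠ q := by
  let i : Fin n := ⟨0, hn⟩
  obtain ⟨a, ha, h1, h2⟩ : ∃ a : ℤ, |a| ≤ 1 ∧ a ≠ p i ∧ a + a ≠ q i := by
    by_cases h : 0 ≠ p i ∧ 0 ≠ q i
    · exact ⟨0, by norm_num, h.1, by simpa using h.2⟩
    · by_cases h' : 1 ≠ p i ∧ 2 ≠ q i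
      · exact ⟨1, by norm_num, h'.1, h'.2⟩
      · exact ⟨-1, by norm_num, by omega, by omega⟩
  refine ⟨Pi.single i a, fun j => ?_, fun h => h1 ?_, fun h => h2 ?_⟩
  · by_cases hj : j = i
    · subst hj; simpa using ha
    · simp [hj]
  · simpa using congrFun h i
  · simpa using congrFun h i

lemma Cone.add (hn : 0 < n) {u₀ : Fin n → ℂ} (hu : ∀ q : Fin n → ℤ, q ≠ 0 → pairC u₀ q ≠ 0)
    {r r' : Fin n → ℤ} (h : ρ.Cone r) (h' : ρ.Cone r') : ρ.Cone (r + r') := by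
  obtain ⟨k, hk, h⟩ := h
  obtain ⟨k', hk', h'⟩ := h'
  refine ⟨2 * (k * k'), Nat.mul_pos (by omega) (Nat.mul_pos hk hk'), fun v b => ?_⟩
  obtain ⟨R, hR⟩ := h v 1
  obtain ⟨R', hR'⟩ := h' v b
  refine ⟨R + R' + 1, fun j hj ε hε => ?_⟩
  obtain ⟨η, hη, h1, h2⟩ := exists_inBox_ne hn ((2 * j * (k * k') : ℤ) • r')
    ((2 * j * (k * k') : ℤ) • (r' - r) - ε)
  have hjk' : j ≤ j * k' := Nat.le_mul_of_pos_right j hk'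
  have hjk : j ≤ j * k := Nat.le_mul_of_pos_right j hk
  have e₁ := hR (2 * (j * k')) (by omega) (ε + η)
    ((hε.add hη).mono (by push_cast; norm_cast; omega))
  have e₂ := hR' (2 * (j * k)) (by omega) (-η)
    (hη.neg.mono (by push_cast; norm_cast; omega))
  have := Kills.add hu e₁ e₂ (fun h0 => h1 ?_) (fun h0 => h2 ?_)
  · rw [one_mul] at this
    convert this using 1
    push_cast
    module
  · push_cast at h0
    rw [← sub_eq_zero, ← neg_eq_zero, ← h0]
    module
  · push_cast at h0
    rw [← sub_eq_zero] at h0 ⊢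
    rw [← h0]
    module

lemma Cone.smul (hn : 0 < n) {u₀ : Fin n → ℂ}
    (hu : ∀ q : Fin n → ℤ, q ≠ 0 → pairC u₀ q ≠ 0)
    {r : Fin n → ℤ} (h : ρ.Cone r) {k : ℕ} (hk : 1 ≤ k) : ρ.Cone ((k : ℤ) • r) := by
  induction k, hk using Nat.le_induction with
  | base => simpa using h
  | succ k _ ih =>
    push_cast
    rw [add_smul, one_smul]
    exact ih.add hn hu h

lemma Cone.add_smul (hn : 0 < n) {u₀ : Fin n → ℂ}
    (hu : ∀ q : Fin n → ℤ, q ≠ 0 → pairC u₀ q ≠ 0)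
    {r s : Fin n → ℤ} (h : ρ.Cone r) (hs : ρ.Cone s) (k : ℕ) : ρ.Cone (r + (k : ℤ) • s) := by
  rcases Nat.eq_zero_or_pos k with rfl | hk
  · simpa using h
  · exact h.add hn hu (hs.smul hn hu hk)

/-- Generic lowering operators in cone directions are injective. -/
lemma Cone.injective (hn : 2 ≤ n) {u₀ : Fin n → ℂ}
    (hu : ∀ q : Fin n → ℤ, q ≠ 0 → pairC u₀ q ≠ 0) (hni : ρ.NoInvariants)
    {r : Fin n → ℤ} (h : ρ.Cone r) {v : V} (hv : ρ.D u₀ (-r) 1 v = 0) : v = 0 := by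
  obtain ⟨k, hk, h⟩ := h
  have step : ∀ (b : B) (q : Fin n → ℤ), q ≠ 0 → q + r ≠ 0 → ρ.Kills v b q →
      ρ.Kills v b (q - r) := by
    intro b q h0 h1 hq
    have := Kills.add_of_single hv hq (hu _ h0) (hu _ (by rwa [sub_neg_eq_add]))
    rwa [one_mul, neg_add_eq_sub] at this
  have descend : ∀ (b : B) (q : Fin n → ℤ), (∀ l : ℕ, 1 ≤ l → q + (l : ℤ) • r ≠ 0) →
      ρ.Kills v b q := by
    intro b q hq
    obtain ⟨σ, hσ⟩ := exists_inBox q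
    obtain ⟨R, hR⟩ := h v b
    have hbig := hR (max R σ) (le_max_left _ _) q (hσ.mono (by exact_mod_cast le_max_right _ _))
    have hall : ∀ l : ℕ, ρ.Kills v b (q + (l : ℤ) • r) → ρ.Kills v b q := by
      intro l
      induction l with
      | zero => intro hl; simpa using hl
      | succ l ih =>
        intro hl
        refine ih ?_
        have := step b _ (hq (l + 1) (by omega)) (fun h0 => hq (l + 2) (by omega) ?_) hl
        · convert this using 1
          push_cast
          module
        · rw [← h0]
          push_cast
          module
    refine hall (max R σ * k) ?_
    convert hbig using 1
    push_cast
    module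
  refine hni v fun b q => ?_
  by_cases hq : ∀ l : ℕ, 1 ≤ l → q + (l : ℤ) • r ≠ 0
  · exact descend b q hq
  · push Not at hq
    obtain ⟨l, hl, hl0⟩ := hq
    obtain ⟨w, hw, hwr⟩ := exists_orthogonal hn r
    obtain ⟨i, hi⟩ := Function.ne_iff.1 hw
    have hwe : pairC w (Pi.single i 1) ≠ 0 := by
      simpa [pairC, Pi.single_apply] using hi
    have hwq : pairC w q = 0 := by
      have := congrArg (pairC w) hl0
      rwa [pairC_add_right, pairC_zsmul_right, hwr, mul_zero, add_zero, pairC_zero_right] at this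
    have off : ∀ (b : B) (p : Fin n → ℤ), pairC w p ≠ 0 → ρ.Kills v b p := by
      intro b p hp
      refine descend b p fun l _ h0 => hp ?_
      have := congrArg (pairC w) h0
      rwa [pairC_add_right, pairC_zsmul_right, hwr, mul_zero, add_zero, pairC_zero_right] at this
    have e₁ := off 1 (q + Pi.single i 1) (by rwa [pairC_add_right, hwq, zero_add])
    have e₂ := off b (-Pi.single i 1) (by rwa [pairC_neg_right, neg_ne_zero])
    have := Kills.add hu e₁ e₂ (by simp) (fun h0 => hwe ?_)
    · simpa using this
    · have := congrArg (pairC w) h0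
      rw [pairC_add_right, pairC_neg_right, hwq, zero_add] at this
      linear_combination this / 2

end Cone

section Weights

lemma pairCC_add (u lam : Fin n → ℂ) (m : Fin n → ℤ) :
    pairCC u (fun i => lam i + m i) = pairCC u lam + pairC u m := by
  simp [pairCC, pairC, mul_add, Finset.sum_add_distrib]

/-- The weight space of weight `lam + m`, for a lattice point `m`. -/
def wt (lam : Fin n → ℂ) (c : S →ₗ[ℂ] ℂ) (m : Fin n → ℤ) : Submodule ℂ V :=
  ρ.weightSpace (fun i => lam i + m i) c

variable {ρ} {lam : Fin n → ℂ} {c : S →ₗ[ℂ] ℂ}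

lemma D_zero_of_mem_wt {m : Fin n → ℤ} {x : V} (hx : x ∈ ρ.wt lam c m) (u : Fin n → ℂ) :
    ρ.D u 0 1 x = (pairCC u lam + pairC u m) • x := by
  rw [hx.1 u, pairCC_add]

lemma D_mem_wt {m m' : Fin n → ℤ} {x : V} (hx : x ∈ ρ.wt lam c m) (u : Fin n → ℂ)
    (r : Fin n → ℤ) (b : B) (hm : m + r = m') : ρ.D u r b x ∈ ρ.wt lam c m' := by
  subst hm
  refine ⟨fun w => ?_, fun s => ?_⟩
  · rw [ρ.D_D, D_zero_of_mem_wt hx, pairCC_add, pairC_add_right, pairC_zero_right, zero_smul,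
      sub_zero, zero_add, one_mul, map_smul, ρ.D_smul_u, LinearMap.smul_apply, ← add_smul,
      add_assoc]
  · have := ρ.D_E u r b s 0 1 x
    rw [pairC_zero_right, zero_smul, add_zero, hx.2 s, map_smul] at this
    exact this.symm

lemma E_mem_wt {m m' : Fin n → ℤ} {x : V} (hx : x ∈ ρ.wt lam c m) (s : S)
    (r : Fin n → ℤ) (b : B) (hm : m + r = m') : ρ.E s r b x ∈ ρ.wt lam c m' := by
  subst hm
  refine ⟨fun w => ?_, fun s' => ?_⟩
  · rw [ρ.D_E, D_zero_of_mem_wt hx, pairCC_add, pairC_add_right, add_zero, one_mul, map_smul,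
      ← add_smul, add_assoc]
  · rw [ρ.E_E, hx.2 s', map_smul]

lemma kills_of_wt_eq_bot {m q : Fin n → ℤ} {x : V} (hx : x ∈ ρ.wt lam c m)
    (h : ρ.wt lam c (m + q) = ⊥) (b : B) : ρ.Kills x b q :=
  ⟨fun u => (Submodule.mem_bot ℂ).1 (h ▸ D_mem_wt hx u q b rfl),
    fun s => (Submodule.mem_bot ℂ).1 (h ▸ E_mem_wt hx s q b rfl)⟩

/-- A vector of a large weight space annihilated by prescribed finitely many operators. -/
lemma exists_kills_box [FiniteDimensional ℂ S]
    (hfd : ∀ m, FiniteDimensional ℂ (ρ.wt lam c m)) (F : Finset B) {M : Set (Fin n → ℤ)}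
    (hM : ∀ N : ℕ, ∃ m ∈ M, N < Module.finrank ℂ (ρ.wt lam c m)) (m₀ : Fin n → ℤ) :
    ∃ m ∈ M, ∃ x : V, x ≠ 0 ∧ ∀ b ∈ F, ∀ ε, InBox ε 2 → ρ.Kills x b (m₀ - m + ε) := by
  classical
  let box : Finset (Fin n → ℤ) := Finset.Icc (fun _ => -2) (fun _ => 2)
  have hbox : ∀ ε, ε ∈ box ↔ InBox ε 2 := fun ε => by
    simp only [box, Finset.mem_Icc, Pi.le_def, InBox, abs_le, forall_and]
  let Y : Submodule ℂ V := ⨆ ε : box, ρ.wt lam c (m₀ + ε)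
  have : FiniteDimensional ℂ Y := Submodule.finiteDimensional_iSup _
  have hY : ∀ ε : box, ρ.wt lam c (m₀ + ε) ≤ Y := fun ε =>
    le_iSup (fun ε : box => ρ.wt lam c (m₀ + ε)) ε
  let ι := box × F
  let e := Module.finBasis ℂ S
  let κ := Fin (Module.finrank ℂ S)
  obtain ⟨m, hmM, hm⟩ := hM (Module.finrank ℂ ((ι × Fin n → Y) × (ι × κ → Y)))
  let fD : ρ.wt lam c m →ₗ[ℂ] (ι × Fin n → Y) := LinearMap.pi fun i =>
    (ρ.D (Pi.single i.2 1) (m₀ - m + i.1.1) i.1.2).restrict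
      fun x hx => hY i.1.1 (D_mem_wt hx _ _ _ (by abel))
  let fE : ρ.wt lam c m →ₗ[ℂ] (ι × κ → Y) := LinearMap.pi fun i =>
    (ρ.E (e i.2) (m₀ - m + i.1.1) i.1.2).restrict
      fun x hx => hY i.1.1 (E_mem_wt hx _ _ _ (by abel))
  have := hfd m
  obtain ⟨x, hx, hx0⟩ := (Submodule.ne_bot_iff _).1
    (LinearMap.ker_ne_bot_of_finrank_lt (f := fD.prod fE) hm)
  have hx' : fD x = 0 ∧ fE x = 0 := by simpa using hx
  refine ⟨m, hmM, x, by simpa using hx0, fun b hb ε hε => ⟨fun u => ?_, fun s => ?_⟩⟩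
  · have h0 : (ρ.DLin (m₀ - m + ε) b).flip (x : V) = 0 := by
      refine (Pi.basisFun ℂ (Fin n)).ext fun i => ?_
      have := congrFun hx'.1 ((⟨ε, (hbox ε).2 hε⟩, ⟨b, hb⟩), i)
      have h1 : ρ.D (Pi.single i 1) (m₀ - m + ε) b (x : V) = 0 := congrArg Subtype.val this
      simpa [DLin] using h1
    exact congrArg (fun f => f u) h0
  · have h0 : (ρ.ELin (m₀ - m + ε) b).flip (x : V) = 0 := by
      refine e.ext fun i => ?_
      have := congrFun hx'.2 ((⟨ε, (hbox ε).2 hε⟩, ⟨b, hb⟩), i)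
      have h1 : ρ.E (e i) (m₀ - m + ε) b (x : V) = 0 := congrArg Subtype.val this
      simpa [ELin] using h1
    exact congrArg (fun f => f s) h0

/-- Splitting a point of a large box so as to make the two degrees distinct and nonzero. -/
lemma exists_box_split (hn : 2 ≤ n) (r ε : Fin n → ℤ) {j : ℕ} (hj : 1 ≤ j)
    (hε : InBox ε (j + 2)) : ∃ ε' : Fin n → ℤ, InBox ε' 2 ∧ InBox (ε - ε') (j + 1) ∧
      r + ε' ≠ 0 ∧ (j : ℤ) • r + (ε - ε') ≠ r + ε' := by
  let i₀ : Fin n := ⟨0, by omega⟩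
  let i₁ : Fin n := ⟨1, by omega⟩
  have hne : i₁ ≠ i₀ := by simp [i₀, i₁, Fin.ext_iff]
  have key : ∀ i, ∃ e : ℤ, |e| ≤ 2 ∧ |ε i - e| ≤ j + 1 ∧ (i = i₀ → r i + e ≠ 0) ∧
      (i = i₁ → j * r i + (ε i - e) ≠ r i + e) := by
    intro i
    have h := abs_le.1 (hε i)
    generalize hp : (j : ℤ) * r i = p
    obtain ⟨a, h1, h2, h3, h4⟩ : ∃ a : ℤ, |a| ≤ 2 ∧ |a + 1| ≤ 2 ∧ |ε i - a| ≤ j + 1 ∧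
        |ε i - (a + 1)| ≤ j + 1 := by
      simp only [abs_le]
      rcases le_or_gt 1 (ε i) with h' | h'
      · exact ⟨1, by omega, by omega, by omega, by omega⟩
      · exact ⟨-2, by omega, by omega, by omega, by omega⟩
    by_cases hi : i = i₀
    · have hi' : i ≠ i₁ := by rw [hi]; exact hne.symm
      by_cases ha : r i + a = 0
      · exact ⟨a + 1, h2, h4, fun _ => by omega, fun h => absurd h hi'⟩
      · exact ⟨a, h1, h3, fun _ => ha, fun h => absurd h hi'⟩
    · by_cases ha : p + (ε i - a) = r i + a
      · exact ⟨a + 1, h2, h4, fun h => absurd h hi, fun _ => by omega⟩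
      · exact ⟨a, h1, h3, fun h => absurd h hi, fun _ => ha⟩
  choose e h1 h2 h3 h4 using key
  exact ⟨e, h1, h2, fun h => h3 i₀ rfl (congrFun h i₀), fun h => h4 i₁ rfl (congrFun h i₁)⟩

/-- Unbounded dimensions along a set of weights produce cone directions. -/
lemma exists_cone_of_unbounded [FiniteDimensional ℂ S] [Algebra.FiniteType ℂ B] (hn : 2 ≤ n)
    {u₀ : Fin n → ℂ} (hu : ∀ q : Fin n → ℤ, q ≠ 0 → pairC u₀ q ≠ 0) (hirr : ρ.IsIrreducible)
    (hfd : ∀ m, FiniteDimensional ℂ (ρ.wt lam c m)) {M : Set (Fin n → ℤ)}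
    (hM : ∀ N : ℕ, ∃ m ∈ M, N < Module.finrank ℂ (ρ.wt lam c m)) (m₀ : Fin n → ℤ) :
    ∃ m ∈ M, ρ.Cone (m₀ - m) := by
  classical
  obtain ⟨F, hF⟩ := (Algebra.FiniteType.out : (⊤ : Subalgebra ℂ B).FG)
  obtain ⟨m, hmM, x, hx0, hx⟩ := exists_kills_box hfd (insert 1 F) hM m₀
  refine ⟨m, hmM, ?_⟩
  set r := m₀ - m
  let P (b : B) (j : ℕ) : Prop := ∀ ε : Fin n → ℤ, InBox ε (j + 1) → ρ.Kills x b ((j : ℤ) • r + ε)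
  have step : ∀ (b f : B) (j : ℕ), 1 ≤ j → f ∈ insert 1 F → P b j → P (b * f) (j + 1) := by
    intro b f j hj hf h ε hε
    obtain ⟨ε', h1, h2, h3, h4⟩ := exists_box_split hn r ε hj
      (hε.mono (by push_cast; linarith))
    have := Kills.add hu (h _ h2) (hx f hf _ h1) h3 h4
    convert this using 1
    push_cast
    module
  let G (b : B) : Prop := ∃ l : ℕ, 1 ≤ l ∧ ∀ j, l ≤ j → P b j
  have hG1 : G 1 := by
    refine ⟨1, le_rfl, fun j hj => ?_⟩
    induction j, hj using Nat.le_induction with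
    | base =>
      intro ε hε
      simpa using hx 1 (Finset.mem_insert_self _ _) ε (by simpa using hε)
    | succ j hj ih =>
      simpa using step 1 1 j hj (Finset.mem_insert_self _ _) ih
  have hGadd : ∀ b b', G b → G b' → G (b + b') := by
    rintro b b' ⟨l, hl, h⟩ ⟨l', hl', h'⟩
    exact ⟨max l l', le_max_of_le_left hl, fun j hj ε hε =>
      (h j (le_of_max_le_left hj) ε hε).add_coeff (h' j (le_of_max_le_right hj) ε hε)⟩
  have hGsmul : ∀ (t : ℂ) b, G b → G (t • b) := by
    rintro t b ⟨l, hl, h⟩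
    exact ⟨l, hl, fun j hj ε hε => (h j hj ε hε).smul_coeff t⟩
  have hmul : ∀ b, ∀ b', G b' → G (b' * b) := by
    intro b
    have hb : b ∈ Algebra.adjoin ℂ (F : Set B) := hF ▸ Algebra.mem_top
    induction hb using Algebra.adjoin_induction with
    | mem f hf =>
      rintro b' ⟨l, hl, h⟩
      refine ⟨l + 1, by omega, fun j hj => ?_⟩
      obtain ⟨i, rfl⟩ : ∃ i, j = i + 1 := ⟨j - 1, by omega⟩
      exact step b' f i (by omega) (Finset.mem_insert_of_mem hf) (h i (by omega))
    | algebraMap t =>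
      intro b' hb'
      rw [mul_comm, ← Algebra.smul_def]
      exact hGsmul t b' hb'
    | add y z _ _ hy hz =>
      intro b' hb'
      rw [mul_add]
      exact hGadd _ _ (hy b' hb') (hz b' hb')
    | mul y z _ _ hy hz =>
      intro b' hb'
      rw [← mul_assoc]
      exact hz _ (hy b' hb')
  refine cone_of_vector hirr le_rfl hx0 fun b => ?_
  obtain ⟨l, -, h⟩ := hmul b 1 hG1
  rw [one_mul] at h
  refine ⟨l, fun j hj ε hε => ?_⟩
  simpa using h j hj ε (hε.mono (by linarith))

variable {u₀ : Fin n → ℂ}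

variable (ρ lam c u₀) in
/-- An irreducible module without invariants whose finite dimensional weight spaces with weights
in `lam + ℤⁿ` have unbounded dimensions, together with a generic vector `u₀`. -/
structure Unbounded : Prop where
  two_le : 2 ≤ n
  generic : ∀ q : Fin n → ℤ, q ≠ 0 → pairC u₀ q ≠ 0
  irreducible : ρ.IsIrreducible
  noInvariants : ρ.NoInvariants
  finiteDimensional : ∀ m, FiniteDimensional ℂ (ρ.wt lam c m)
  lt_finrank : ∀ N : ℕ, ∃ m, N < Module.finrank ℂ (ρ.wt lam c m)

namespace Unbounded

lemma cone_add (H : ρ.Unbounded lam c u₀) {r s : Fin n → ℤ} (hr : ρ.Cone r) (hs : ρ.Cone s) :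
    ρ.Cone (r + s) :=
  hr.add (by have := H.two_le; omega) H.generic hs

lemma cone_smul (H : ρ.Unbounded lam c u₀) {r : Fin n → ℤ} (hr : ρ.Cone r) {k : ℤ} (hk : 1 ≤ k) :
    ρ.Cone (k • r) := by
  lift k to ℕ using by omega
  exact hr.smul (by have := H.two_le; omega) H.generic (by exact_mod_cast hk)

lemma cone_add_smul (H : ρ.Unbounded lam c u₀) {r s : Fin n → ℤ} (hr : ρ.Cone r) (hs : ρ.Cone s)
    {k : ℤ} (hk : 0 ≤ k) :
    ρ.Cone (r + k • s) := by
  lift k to ℕ using hk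
  exact hr.add_smul (by have := H.two_le; omega) H.generic hs k

lemma not_cone_zero (H : ρ.Unbounded lam c u₀) : ¬ ρ.Cone 0 :=
    ExtWittRep.not_cone_zero H.irreducible H.noInvariants

lemma cone_ne_zero (H : ρ.Unbounded lam c u₀) {r : Fin n → ℤ} (hr : ρ.Cone r) : r ≠ 0 := by
  rintro rfl
  exact H.not_cone_zero hr

lemma finrank_le (H : ρ.Unbounded lam c u₀) {r m m' : Fin n → ℤ} (hr : ρ.Cone r) (hm : m = m' + r) :
    Module.finrank ℂ (ρ.wt lam c m) ≤ Module.finrank ℂ (ρ.wt lam c m') := by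
  have := H.finiteDimensional m'
  let f : ρ.wt lam c m →ₗ[ℂ] ρ.wt lam c m' :=
    (ρ.D u₀ (-r) 1).restrict fun x hx => D_mem_wt hx _ _ _ (by rw [hm]; abel)
  refine LinearMap.finrank_le_finrank_of_injective (f := f) ?_
  rw [← LinearMap.ker_eq_bot, LinearMap.ker_eq_bot']
  intro x hx
  exact Subtype.ext (hr.injective H.two_le H.generic H.noInvariants (congrArg Subtype.val hx))

lemma wt_eq_bot_of_cone (H : ρ.Unbounded lam c u₀) {r m m' : Fin n → ℤ} (hr : ρ.Cone r)
    (hm : m = m' + r)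
    (h : ρ.wt lam c m' = ⊥) : ρ.wt lam c m = ⊥ := by
  have := H.finiteDimensional m
  have h1 := H.finrank_le hr hm
  rw [h, finrank_bot] at h1
  exact Submodule.finrank_eq_zero.1 (by omega)

lemma exists_wt_ne_bot (H : ρ.Unbounded lam c u₀) : ∃ m, ρ.wt lam c m ≠ ⊥ := by
  obtain ⟨m, hm⟩ := H.lt_finrank 0
  exact ⟨m, fun h => by rw [h, finrank_bot] at hm; omega⟩

/-- Far enough operators along a cone direction annihilate a given vector. -/
lemma exists_D_eq_zero {r : Fin n → ℤ} (hr : ρ.Cone r) (v : V) :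
    ∃ a : ℕ, ∀ j : ℤ, a ≤ j → ρ.D u₀ (j • r) 1 v = 0 := by
  obtain ⟨k, hk, h⟩ := hr
  obtain ⟨R, hR⟩ := h v 1
  obtain ⟨σ, hσ⟩ := exists_inBox r
  refine ⟨(R + k * σ) * k, fun j hj => ?_⟩
  have hkpos : (0 : ℤ) < k := by exact_mod_cast hk
  have hdiv : (R + k * σ : ℤ) ≤ j / k := by
    rw [Int.le_ediv_iff_mul_le hkpos]
    exact_mod_cast hj
  have hnonneg : (0 : ℤ) ≤ R + k * σ := by positivity
  obtain ⟨q, hq⟩ := Int.eq_ofNat_of_zero_le (hnonneg.trans hdiv)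
  obtain ⟨l, hl⟩ := Int.eq_ofNat_of_zero_le (Int.emod_nonneg j hkpos.ne')
  have hlk : l < k := by
    have := Int.emod_lt_of_pos j hkpos
    omega
  have hks : (l * σ : ℤ) ≤ k * σ := by exact_mod_cast Nat.mul_le_mul_right σ hlk.le
  have hσk : (0 : ℤ) ≤ k * σ := by positivity
  have hkill := hR q (by omega) ((l : ℤ) • r) ((hσ.smul l).mono (by omega))
  have hj' : j = q * k + l := by
    have := Int.mul_ediv_add_emod j k
    rw [hq, hl] at this
    linarith
  rw [hj', add_smul]
  exact hkill.1 u₀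

lemma exists_D_eq_zero_wt (H : ρ.Unbounded lam c u₀) {r : Fin n → ℤ} (hr : ρ.Cone r)
    (m : Fin n → ℤ) :
    ∃ a : ℕ, ∀ j : ℤ, a ≤ j → ∀ x ∈ ρ.wt lam c m, ρ.D u₀ (j • r) 1 x = 0 := by
  have := H.finiteDimensional m
  let e := Module.finBasis ℂ (ρ.wt lam c m)
  choose a ha using fun i => exists_D_eq_zero (u₀ := u₀) hr (e i : V)
  refine ⟨∑ i, a i, fun j hj x hx => ?_⟩
  have h0 : (ρ.D u₀ (j • r) 1).comp (ρ.wt lam c m).subtype = 0 := by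
    refine e.ext fun i => ha i j (le_trans ?_ hj)
    exact_mod_cast Finset.single_le_sum (f := a) (fun _ _ => Nat.zero_le _) (Finset.mem_univ i)
  exact congrArg (fun f => f ⟨x, hx⟩) h0

lemma D_eq_zero_step (H : ρ.Unbounded lam c u₀) {r m m' : Fin n → ℤ} (hr : ρ.Cone r)
    (hm : m' = m + r) {a : ℤ} (ha : 0 ≤ a)
    (h : ∀ j : ℤ, a ≤ j → ∀ x ∈ ρ.wt lam c m, ρ.D u₀ (j • r) 1 x = 0) :
    ∀ j : ℤ, a - 1 ≤ j → ∀ x ∈ ρ.wt lam c m', ρ.D u₀ (j • r) 1 x = 0 := by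
  intro j hj x hx
  have hr0 := H.generic r (H.cone_ne_zero hr)
  obtain ⟨N, hN⟩ := exists_D_eq_zero (u₀ := u₀) hr x
  have hstep : ∀ i : ℤ, a ≤ i → ρ.D u₀ (i • r) 1 x = 0 → ρ.D u₀ ((i - 1) • r) 1 x = 0 := by
    intro i hi hix
    have h1 := ρ.D_D u₀ (i • r) 1 u₀ (-r) 1 x
    rw [h i hi _ (D_mem_wt hx _ _ _ (by rw [hm]; abel)), hix, map_zero, zero_add, ← sub_smul,
      pairC_neg_right, pairC_zsmul_right, ρ.D_smul_u, one_mul, LinearMap.smul_apply] at h1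
    have h2 := (smul_eq_zero.1 h1.symm).resolve_left ?_
    · rwa [sub_smul, one_smul, sub_eq_add_neg]
    · have : (i : ℂ) + 1 ≠ 0 := by
        have : i + 1 ≠ 0 := by omega
        exact_mod_cast this
      rw [show -pairC u₀ r - (i : ℂ) * pairC u₀ r = -((i + 1) * pairC u₀ r) by ring]
      exact neg_ne_zero.2 (mul_ne_zero this hr0)
  have hdown : ∀ d : ℕ, a - 1 ≤ N + a - d → ρ.D u₀ ((N + a - d : ℤ) • r) 1 x = 0 := by
    intro d
    induction d with
    | zero => intro _; exact hN _ (by push_cast; omega)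
    | succ d ih =>
      intro hd
      push_cast at hd ⊢
      rw [show (N : ℤ) + a - (d + 1) = N + a - d - 1 by ring]
      exact hstep _ (by omega) (ih (by omega))
  rcases le_or_gt (N + a) j with h1 | h1
  · exact hN j (by omega)
  · have := hdown (N + a - j).toNat (by omega)
    rwa [show (N + a - ((N + a - j).toNat : ℕ) : ℤ) = j by omega] at this

/-- Weights are bounded above along cone directions. -/
lemma exists_wt_eq_bot (H : ρ.Unbounded lam c u₀) {r : Fin n → ℤ} (hr : ρ.Cone r) (m : Fin n → ℤ) :
    ∃ N : ℕ, ∀ k : ℤ, N ≤ k → ρ.wt lam c (m + k • r) = ⊥ := by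
  obtain ⟨a, ha⟩ := H.exists_D_eq_zero_wt hr m
  have key : ∀ k : ℕ, k ≤ a + 1 → ∀ j : ℤ, (a : ℤ) - k ≤ j →
      ∀ x ∈ ρ.wt lam c (m + (k : ℤ) • r), ρ.D u₀ (j • r) 1 x = 0 := by
    intro k
    induction k with
    | zero => simpa using ha
    | succ k ih =>
      intro hk j hj
      exact H.D_eq_zero_step hr (by push_cast; rw [add_smul, one_smul, add_assoc])
        (by omega) (ih (by omega)) j (by push_cast at hj; omega)
  have hbot : ρ.wt lam c (m + ((a + 1 : ℕ) : ℤ) • r) = ⊥ := by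
    rw [eq_bot_iff]
    intro x hx
    refine (Submodule.mem_bot ℂ).2 (hr.injective H.two_le H.generic H.noInvariants ?_)
    simpa using key (a + 1) le_rfl (-1) (by push_cast; omega) x hx
  refine ⟨a + 2, fun k hk => ?_⟩
  refine H.wt_eq_bot_of_cone (H.cone_smul hr (k := k - (a + 1 : ℕ)) (by push_cast at hk ⊢; omega))
    ?_ hbot
  rw [add_assoc, ← add_smul, add_sub_cancel]

/-- The last weight along a cone direction. -/
lemma exists_top (H : ρ.Unbounded lam c u₀) {r : Fin n → ℤ} (hr : ρ.Cone r) {m : Fin n → ℤ}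
    (hm : ρ.wt lam c m ≠ ⊥) :
    ∃ h : ℤ, 0 ≤ h ∧ ρ.wt lam c (m + h • r) ≠ ⊥ ∧
      ∀ j : ℤ, 1 ≤ j → ρ.wt lam c (m + h • r + j • r) = ⊥ := by
  obtain ⟨N, hN⟩ := H.exists_wt_eq_bot hr m
  obtain ⟨h, h1, h2⟩ := Int.exists_greatest_of_bdd (P := fun k => ρ.wt lam c (m + k • r) ≠ ⊥)
    ⟨N, fun k hk => by by_contra h; exact hk (hN k (by omega))⟩ ⟨0, by simpa using hm⟩
  refine ⟨h, h2 0 (by simpa using hm), h1, fun j hj => ?_⟩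
  by_contra hne
  rw [add_assoc, ← add_smul] at hne
  have := h2 _ hne
  omega

/-- Products of two lowering operators orthogonal to the line produce many vectors. -/
lemma le_finrank (H : ρ.Unbounded lam c u₀) {r m m' : Fin n → ℤ} (hr : r ≠ 0)
    (hm : ρ.wt lam c m ≠ ⊥) (htop : ∀ j : ℤ, 1 ≤ j → ρ.wt lam c (m + j • r) = ⊥)
    {w : Fin n → ℂ} (hw : pairC w r = 0) (hγ : pairCC w lam + pairC w m ≠ 0) (N : ℕ)
    (hm' : m' = m - (2 * N + 1 : ℤ) • r) : N ≤ Module.finrank ℂ (ρ.wt lam c m') := by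
  obtain ⟨v, hv, hv0⟩ := (Submodule.ne_bot_iff _).1 hm
  have hr0 := H.generic r hr
  set γ := pairCC w lam + pairC w m
  set e := pairC u₀ r
  let W (j : ℤ) : Module.End ℂ V := ρ.D w (j • r) 1
  let d (j : ℤ) : Module.End ℂ V := ρ.D u₀ (j • r) 1
  have hW0 : W 0 v = γ • v := by simpa [W] using D_zero_of_mem_wt hv w
  have hW : ∀ j : ℤ, 1 ≤ j → W j v = 0 := fun j hj =>
    (kills_of_wt_eq_bot hv (htop j hj) 1).1 w
  have hd : ∀ j : ℤ, 1 ≤ j → d j v = 0 := fun j hj =>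
    (kills_of_wt_eq_bot hv (htop j hj) 1).1 u₀
  have hdW : ∀ (i j : ℤ) (x : V), d i (W j x) = W j (d i x) + (j * e) • W (i + j) x := by
    intro i j x
    have := ρ.D_D u₀ (i • r) 1 w (j • r) 1 x
    rw [pairC_zsmul_right, pairC_zsmul_right, hw, mul_zero, zero_smul, sub_zero, ρ.D_smul_u,
      one_mul, ← add_smul] at this
    exact this
  have hWW : ∀ (i j : ℤ) (x : V), W i (W j x) = W j (W i x) := by
    intro i j x
    have := ρ.D_D w (i • r) 1 w (j • r) 1 x
    rw [pairC_zsmul_right, pairC_zsmul_right, hw, mul_zero, mul_zero, sub_self,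
      ← zero_smul ℂ (0 : Fin n → ℂ), ρ.D_smul_u, zero_smul, LinearMap.zero_apply,
      add_zero] at this
    exact this
  let t : ℤ := 2 * N + 1
  let x (k : ℤ) : V := W (-k) (W (k - t) v)
  have hlow : ∀ i k : ℤ, 1 ≤ k → k ≤ N → i ≤ N →
      d (t - i) (x k) = ((k - t) * e) • W (-k) (W (k - i) v) := by
    intro i k hk hkN hi
    simp only [x]
    rw [hdW, hdW, hd _ (by omega), map_zero, zero_add, hWW (t - i + -k),
      hW (t - i + -k) (by omega), map_zero, smul_zero, add_zero, map_smul]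
    push_cast
    congr 4
    ring
  have hdiag : ∀ i : ℤ, 1 ≤ i → i ≤ N →
      d i (d (t - i) (x i)) = ((i - t) * e * (γ * (-i * e) * γ)) • v := by
    intro i hi hiN
    rw [hlow i i hi hiN hiN, map_smul, sub_self, hW0, map_smul, map_smul, hdW, hd i hi, map_zero,
      zero_add, add_neg_cancel, hW0, smul_smul, smul_smul, smul_smul]
    push_cast
    ring_nf
  have hoff : ∀ i k : ℤ, 1 ≤ i → i ≤ N → 1 ≤ k → k ≤ N → k ≠ i → d i (d (t - i) (x k)) = 0 := by
    intro i k hi hiN hk hkN hne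
    rw [hlow i k hk hkN hiN, map_smul]
    rcases lt_or_gt_of_ne hne with h | h
    · rw [hdW, hdW, hd i hi, map_zero, zero_add, hW _ (by omega), smul_zero, map_zero, zero_add,
        hWW, hW _ (by omega), map_zero, smul_zero, smul_zero]
    · rw [hW _ (by omega), map_zero, map_zero, smul_zero]
  have hmem : ∀ k : ℤ, x k ∈ ρ.wt lam c m' := fun k =>
    D_mem_wt (D_mem_wt hv w ((k - t) • r) 1 rfl) w _ 1 (by rw [hm']; simp only [t]; module)
  have := H.finiteDimensional m'
  let X (k : Fin N) : ρ.wt lam c m' := ⟨x (k + 1 : ℤ), hmem _⟩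
  have hind : LinearIndependent ℂ X := by
    rw [Fintype.linearIndependent_iff]
    intro g hg i
    have h1 : ∑ k, g k • x (k + 1 : ℤ) = 0 := by
      simpa [X] using congrArg (ρ.wt lam c m').subtype hg
    have h2 := congrArg (fun y => d (i + 1) (d (t - (i + 1)) y)) h1
    simp only [map_sum, map_smul, map_zero] at h2
    rw [Finset.sum_eq_single i, hdiag _ (by omega) (by omega), smul_smul] at h2
    · refine (mul_eq_zero.1 ((smul_eq_zero.1 h2).resolve_right hv0)).resolve_right ?_
      have e1 : (((i : ℤ) + 1 : ℤ) : ℂ) - t ≠ 0 := by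
        rw [← Int.cast_sub]
        exact_mod_cast (by omega : (i : ℤ) + 1 - t ≠ 0)
      have e2 : (((i : ℤ) + 1 : ℤ) : ℂ) ≠ 0 := by
        exact_mod_cast (by omega : (i : ℤ) + 1 ≠ 0)
      exact mul_ne_zero (mul_ne_zero e1 hr0)
        (mul_ne_zero (mul_ne_zero hγ (mul_ne_zero (neg_ne_zero.2 e2) hr0)) hγ)
    · intro k _ hk
      rw [hoff _ _ (by omega) (by omega) (by omega) (by omega)
        (fun h => hk (Fin.ext (by omega))), smul_zero]
    · simp
  simpa using hind.fintype_card_le_finrank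

lemma exists_pairing_ne_zero (hn : 2 ≤ n) (lam : Fin n → ℂ) (r m : Fin n → ℤ) :
    ∃ (w : Fin n → ℂ) (ε : Fin n → ℤ), InBox ε 1 ∧ pairC w r = 0 ∧
      pairCC w lam + pairC w (m - ε) ≠ 0 := by
  obtain ⟨w, hw0, hw⟩ := exists_orthogonal hn r
  by_cases h : pairCC w lam + pairC w m = 0
  · obtain ⟨i, hi⟩ := Function.ne_iff.1 hw0
    refine ⟨w, Pi.single i 1, inBox_single i, hw, ?_⟩
    have : pairC w (Pi.single i 1) = w i := by
      simp [pairC, Pi.single_apply]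
    rw [pairC_sub_right, this, ← add_sub_assoc, h, zero_sub]
    exact neg_ne_zero.2 hi
  · exact ⟨w, 0, inBox_zero zero_le_one, hw, by simpa using h⟩

lemma exists_le_finrank (H : ρ.Unbounded lam c u₀) {r m : Fin n → ℤ} (hr : ρ.Cone r)
    (hm : ρ.wt lam c m ≠ ⊥) {w : Fin n → ℂ} (hw : pairC w r = 0)
    (hγ : pairCC w lam + pairC w m ≠ 0) :
    ∃ h : ℤ, 0 ≤ h ∧
      ∀ N : ℕ, N ≤ Module.finrank ℂ (ρ.wt lam c (m + h • r - (2 * N + 1 : ℤ) • r)) := by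
  obtain ⟨h, h0, h1, h2⟩ := H.exists_top hr hm
  refine ⟨h, h0, fun N => H.le_finrank (H.cone_ne_zero hr) h1 h2 hw ?_ N rfl⟩
  rwa [pairC_add_right, pairC_zsmul_right, hw, mul_zero, add_zero]

lemma cone_of_zsmul {r : Fin n → ℤ} {k : ℤ} (hk : 1 ≤ k) (h : ρ.Cone (k • r)) : ρ.Cone r := by
  lift k to ℕ using by omega
  exact h.of_smul (by exact_mod_cast hk)

/-- Each line through a cone direction stays in the cone on at least one side. -/
lemma cone_dichotomy [FiniteDimensional ℂ S] [Algebra.FiniteType ℂ B]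
    (H : ρ.Unbounded lam c u₀) {r : Fin n → ℤ} (hr : ρ.Cone r) (s : Fin n → ℤ) :
    (∀ k : ℤ, 1 ≤ k → ρ.Cone (r + k • s)) ∨ ∀ k : ℤ, 1 ≤ k → ρ.Cone (r - k • s) := by
  by_contra! hcon
  obtain ⟨⟨k₁, hk₁, h₁⟩, ⟨k₂, hk₂, h₂⟩⟩ := hcon
  obtain ⟨k, hk, hbox⟩ := hr.exists_box
  obtain ⟨m', hm'⟩ := H.exists_wt_ne_bot
  obtain ⟨w, η, hη, hw, hγ⟩ := exists_pairing_ne_zero H.two_le lam r (m' - (k : ℤ) • r)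
  set m := m' - (k : ℤ) • r - η with hmdef
  have hm : ρ.wt lam c m ≠ ⊥ := fun h => hm' <| by
    refine H.wt_eq_bot_of_cone (hbox 1 le_rfl η (by simpa using hη)) ?_ h
    rw [hmdef]
    push_cast
    module
  have hfar : ∀ b₀ : ℤ, ∃ b, b₀ ≤ b ∧ ρ.wt lam c (m + b • s) ≠ ⊥ := by
    by_contra! hb
    obtain ⟨b₀, hb₀⟩ := hb
    obtain ⟨v, hv, hv0⟩ := (Submodule.ne_bot_iff _).1 hm
    refine h₁ (cone_of_vector H.irreducible hk hv0 fun b => ⟨b₀.toNat + 1, fun j hj ε hε => ?_⟩)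
    refine kills_of_wt_eq_bot hv ?_ b
    have hjk : (j : ℤ) ≤ j * k * k₁ := by
      have h1 : (1 : ℤ) ≤ k := by exact_mod_cast hk
      have h2 : (0 : ℤ) ≤ j := by positivity
      nlinarith [mul_nonneg h2 (sub_nonneg.2 h1),
        mul_nonneg (mul_nonneg h2 (by omega : (0 : ℤ) ≤ k)) (sub_nonneg.2 hk₁)]
    refine H.wt_eq_bot_of_cone (hbox j (by omega) ε hε) ?_ (hb₀ (j * k * k₁) (by omega))
    module
  have hgood : ∀ b₀ : ℤ, ∃ b, b₀ ≤ b ∧ ρ.wt lam c (m + b • s) ≠ ⊥ ∧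
      pairCC w lam + pairC w (m + b • s) ≠ 0 := by
    intro b₀
    obtain ⟨b, hb, hb'⟩ := hfar b₀
    obtain ⟨b', hbb', hb''⟩ := hfar (b + 1)
    by_cases hz : pairCC w lam + pairC w (m + b • s) = 0
    · refine ⟨b', by omega, hb'', fun hz' => hγ ?_⟩
      rw [pairC_add_right, pairC_zsmul_right] at hz hz'
      have hne : (b' : ℂ) - b ≠ 0 := sub_ne_zero.2 (by exact_mod_cast (by omega : b' ≠ b))
      have hs : pairC w s = 0 :=
        (mul_eq_zero.1 (by linear_combination hz' - hz :
          ((b' : ℂ) - b) * pairC w s = 0)).resolve_left hne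
      rw [hs] at hz
      linear_combination hz
    · exact ⟨b, hb, hb', hz⟩
  obtain ⟨p, ⟨b, h, t, hb, hh, ht, rfl⟩, hp⟩ := exists_cone_of_unbounded H.two_le H.generic
    H.irreducible H.finiteDimensional
    (M := {p | ∃ b h t : ℤ, 1 ≤ b ∧ 0 ≤ h ∧ t * k₂ ≤ b ∧ p = m + b • s + h • r - t • r}) (by
      intro N
      obtain ⟨b, hb, hb', hz⟩ := hgood (max 1 ((2 * (N + 1 : ℕ) + 1 : ℤ) * k₂))
      obtain ⟨h, hh, hN⟩ := H.exists_le_finrank hr hb' hw hz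
      exact ⟨_, ⟨b, h, _, le_of_max_le_left hb, hh, le_of_max_le_right hb, rfl⟩, hN (N + 1)⟩) m
  refine h₂ (cone_of_zsmul hb ?_)
  have := H.cone_add_smul (H.cone_smul (H.cone_add_smul hp hr hh) hk₂) hr (sub_nonneg.2 ht)
  convert this using 1
  module

lemma cone_trichotomy [FiniteDimensional ℂ S] [Algebra.FiniteType ℂ B]
    (H : ρ.Unbounded lam c u₀) {r : Fin n → ℤ} (hr : ρ.Cone r) (s : Fin n → ℤ) :
    ρ.Cone s ∨ ρ.Cone (-s) ∨ ∀ k : ℤ, ρ.Cone (r + k • s) := by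
  have aux : ∀ s : Fin n → ℤ, (∀ k : ℤ, 1 ≤ k → ρ.Cone (r + k • s)) →
      ρ.Cone s ∨ ∀ k : ℤ, ρ.Cone (r + k • s) := by
    intro s hs
    by_contra! hcon
    obtain ⟨hs0, k, hk⟩ := hcon
    have hk1 : k ≤ -1 := by
      by_contra hlt
      rcases eq_or_lt_of_le (by omega : 0 ≤ k) with rfl | h
      · exact hk (by simpa using hr)
      · exact hk (hs k h)
    rcases H.cone_dichotomy hr ((-2 * k) • s - r) with h | h
    · refine hs0 (cone_of_zsmul (k := -4 * k) (by omega) ?_)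
      convert H.cone_add (h 2 (by omega)) hr using 1
      module
    · refine hk (cone_of_zsmul (k := 4) (by omega) ?_)
      convert H.cone_add (h 2 (by omega)) hr using 1
      module
  rcases H.cone_dichotomy hr s with h | h
  · exact (aux s h).imp_right Or.inr
  · refine Or.inr ((aux (-s) fun k hk => ?_).imp_right fun h' k => ?_)
    · simpa [sub_eq_add_neg] using h k hk
    · simpa using h' (-k)

/-- The lineality subgroup of the cone, relative to a base point `r`. -/
def linealitySubgroup (H : ρ.Unbounded lam c u₀) {r : Fin n → ℤ} (hr : ρ.Cone r) :
    AddSubgroup (Fin n → ℤ) where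
  carrier := {s | ∀ k : ℤ, ρ.Cone (r + k • s)}
  zero_mem' := fun k => by simpa using hr
  add_mem' := fun {s s'} hs hs' k => by
    refine cone_of_zsmul (k := 2) (by omega) ?_
    convert H.cone_add (hs (2 * k)) (hs' (2 * k)) using 1
    module
  neg_mem' := fun {s} hs k => by simpa using hs (-k)

lemma cone_add_mem (H : ρ.Unbounded lam c u₀) {r : Fin n → ℤ} (hr : ρ.Cone r)
    {s a : Fin n → ℤ} (hs : ρ.Cone s) (ha : a ∈ H.linealitySubgroup hr) : ρ.Cone (s + a) := by
  obtain ⟨N, hN, h⟩ := hs.exists_nsmul_add (-r)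
  refine cone_of_zsmul (k := N) (by exact_mod_cast hN) ?_
  convert H.cone_add (ha N) h using 1
  module

lemma not_mem_of_cone (H : ρ.Unbounded lam c u₀) {r : Fin n → ℤ} (hr : ρ.Cone r)
    {s : Fin n → ℤ} (hs : ρ.Cone s) : s ∉ H.linealitySubgroup hr := fun h =>
  H.not_cone_zero (by simpa using H.cone_add_mem hr hs (neg_mem h))

lemma not_cone_neg (H : ρ.Unbounded lam c u₀) {s : Fin n → ℤ} (hs : ρ.Cone s) :
    ¬ ρ.Cone (-s) := fun h =>
  H.not_cone_zero (by simpa using H.cone_add hs h)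

/-- A least cone direction modulo the lineality subgroup splits the lattice. -/
lemma isDirectSumDecomp (H : ρ.Unbounded lam c u₀) {r β : Fin n → ℤ} (hr : ρ.Cone r)
    (hβ : ρ.Cone β)
    (hmin : ∀ s, ρ.Cone s → ρ.Cone (s - β) ∨ s - β ∈ H.linealitySubgroup hr) :
    IsDirectSumDecomp (H.linealitySubgroup hr) β := by
  refine ⟨fun m => ?_, fun d hd => ?_⟩
  · obtain ⟨N, -, hN⟩ := hβ.exists_nsmul_add (-m)
    obtain ⟨N', -, hN'⟩ := hβ.exists_nsmul_add m
    obtain ⟨d, hd, hmax⟩ := Int.exists_greatest_of_bdd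
      (P := fun d => ρ.Cone (m - d • β) ∨ m - d • β ∈ H.linealitySubgroup hr) (by
        refine ⟨N, fun d hd => ?_⟩
        by_contra hlt
        have h1 : ρ.Cone (-(m - d • β)) := by
          convert H.cone_add_smul hN hβ (k := d - N) (by omega) using 1
          module
        rcases hd with h | h
        · exact H.not_cone_neg h h1
        · exact H.not_mem_of_cone hr h1 (neg_mem h))
      ⟨-N', Or.inl (by convert hN' using 1; module)⟩
    refine ⟨m - d • β, hd.resolve_left fun h => ?_, d, by abel⟩
    have := hmax (d + 1) (by
      have h1 := hmin _ h
      rwa [sub_sub, ← add_one_zsmul] at h1)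
    omega
  · rcases lt_trichotomy d 0 with h | h | h
    · have h1 := neg_mem hd
      rw [← neg_smul] at h1
      exact absurd h1 (H.not_mem_of_cone hr (H.cone_smul hβ (by omega)))
    · exact h
    · exact absurd hd (H.not_mem_of_cone hr (H.cone_smul hβ h))

lemma exists_isHWVector (H : ρ.Unbounded lam c u₀) {r β : Fin n → ℤ} (hr : ρ.Cone r)
    (hβ : ρ.Cone β) : ∃ z, ρ.IsHWVector (H.linealitySubgroup hr) β z := by
  obtain ⟨m₀, hm₀⟩ := H.exists_wt_ne_bot
  obtain ⟨h, -, hm, htop⟩ := H.exists_top hβ hm₀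
  set m := m₀ + h • β
  obtain ⟨j, ⟨a, ha, hj⟩, hmax⟩ := Int.exists_greatest_of_bdd
    (P := fun j => ∃ a ∈ H.linealitySubgroup hr, ρ.wt lam c (m + a + j • β) ≠ ⊥) (by
      refine ⟨1, ?_⟩
      rintro j ⟨a, ha, hj⟩
      by_contra hlt
      refine hj (H.wt_eq_bot_of_cone
        (H.cone_add_mem hr (H.cone_smul hβ (k := j - 1) (by omega)) ha) ?_ (htop 1 le_rfl))
      module)
    ⟨0, 0, zero_mem _, by simpa using hm⟩
  obtain ⟨z, hz, hz0⟩ := (Submodule.ne_bot_iff _).1 hj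
  have hkill : ∀ q b, posDeg (H.linealitySubgroup hr) β q → ρ.Kills z b q := by
    rintro q b ⟨a', ha', d, hd, rfl⟩
    refine kills_of_wt_eq_bot hz ?_ b
    by_contra hne
    have := hmax (j + d) ⟨a + a', add_mem ha ha', by convert hne using 2; module⟩
    omega
  refine ⟨z, hz0, ⟨_, c, hz⟩, fun u q b hq => (hkill q b hq).1 u,
    fun s q b hq => (hkill q b hq).2 s, fun U hU hzU => ?_⟩
  exact (H.irreducible.2 U hU).resolve_left fun h => hz0 (by simpa [h] using hzU)

/-- Without a least cone direction the cone contains arbitrarily small directions. -/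
lemma exists_cone_sub_smul [FiniteDimensional ℂ S] [Algebra.FiniteType ℂ B]
    (H : ρ.Unbounded lam c u₀) {r : Fin n → ℤ} (hr : ρ.Cone r)
    (hmin : ∀ β, ρ.Cone β →
      ∃ s, ρ.Cone s ∧ ¬ ρ.Cone (s - β) ∧ s - β ∉ H.linealitySubgroup hr)
    {β : Fin n → ℤ} (hβ : ρ.Cone β) {t : ℕ} (ht : 1 ≤ t) :
    ∃ s, ρ.Cone s ∧ ρ.Cone (β - (t : ℤ) • s) := by
  have hsmaller : ∀ β, ρ.Cone β → ∃ s, ρ.Cone s ∧ ρ.Cone (β - s) := by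
    intro β hβ
    obtain ⟨s, hs, h1, h2⟩ := hmin β hβ
    rcases H.cone_trichotomy hr (s - β) with h | h | h
    · exact absurd h h1
    · exact ⟨s, hs, by simpa using h⟩
    · exact absurd h h2
  have hhalf : ∀ β, ρ.Cone β → ∃ s, ρ.Cone s ∧ ρ.Cone (β - (2 : ℤ) • s) := by
    intro β hβ
    obtain ⟨s, hs, hs'⟩ := hsmaller β hβ
    rcases H.cone_trichotomy hr (β - (2 : ℤ) • s) with h | h | h
    · exact ⟨s, hs, h⟩
    · refine ⟨β - s, hs', ?_⟩
      convert h using 1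
      module
    · obtain ⟨q, hq, hq'⟩ := hsmaller s hs
      refine ⟨q, hq, ?_⟩
      convert H.cone_add_mem hr (H.cone_smul hq' (k := 2) (by omega)) h using 1
      module
  induction t, ht using Nat.le_induction with
  | base =>
    obtain ⟨s, hs, hs'⟩ := hsmaller β hβ
    exact ⟨s, hs, by simpa using hs'⟩
  | succ t ht ih =>
    obtain ⟨s, hs, hs'⟩ := ih
    obtain ⟨q, hq, hq'⟩ := hhalf s hs
    refine ⟨q, hq, ?_⟩
    convert H.cone_add_smul (H.cone_add_smul hs' hq' (k := t) (by omega)) hq (k := t - 1)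
      (by omega) using 1
    push_cast
    module

lemma exists_least_cone [FiniteDimensional ℂ S] [Algebra.FiniteType ℂ B]
    (H : ρ.Unbounded lam c u₀) {r : Fin n → ℤ} (hr : ρ.Cone r) :
    ∃ β, ρ.Cone β ∧
      ∀ s, ρ.Cone s → ρ.Cone (s - β) ∨ s - β ∈ H.linealitySubgroup hr := by
  by_contra! hmin
  obtain ⟨k, hk, hbox⟩ := hr.exists_box
  have hbox1 : ∀ ε, InBox ε 1 → ρ.Cone ((k : ℤ) • r + ε) := fun ε hε => by
    simpa using hbox 1 le_rfl ε (by simpa using hε)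
  have hk' : ρ.Cone ((k : ℤ) • r) := H.cone_smul hr (by exact_mod_cast hk)
  obtain ⟨m, hm⟩ := H.exists_wt_ne_bot
  set p := m - (3 * k : ℤ) • r with hp
  suffices hle : ∀ N : ℕ, N ≤ Module.finrank ℂ (ρ.wt lam c p) from
    absurd (hle (Module.finrank ℂ (ρ.wt lam c p) + 1)) (by omega)
  intro N
  obtain ⟨s, hs, hs'⟩ := H.exists_cone_sub_smul hr hmin hk' (t := 2 * N + 1) (by omega)
  obtain ⟨w, ε, hε, hw, hγ⟩ := exists_pairing_ne_zero H.two_le lam s (m - (k : ℤ) • r)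
  have hx : ρ.wt lam c (m - (k : ℤ) • r - ε) ≠ ⊥ := fun h =>
    hm (H.wt_eq_bot_of_cone (hbox1 ε hε) (by abel) h)
  obtain ⟨h, hh, hN⟩ := H.exists_le_finrank hs hx hw hγ
  refine (hN N).trans (H.finrank_le
    (H.cone_add_smul (H.cone_add (hbox1 _ hε.neg) hs') hs hh) ?_)
  rw [hp]
  push_cast
  module

theorem exists_isDirectSumDecomp [FiniteDimensional ℂ S] [Algebra.FiniteType ℂ B]
    (H : ρ.Unbounded lam c u₀) : ∃ (β : Fin n → ℤ) (K : AddSubgroup (Fin n → ℤ)),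
      IsDirectSumDecomp K β ∧ ∃ z : V, ρ.IsHWVector K β z := by
  obtain ⟨m, -, hr⟩ := exists_cone_of_unbounded H.two_le H.generic H.irreducible
    H.finiteDimensional (M := Set.univ) (by simpa using H.lt_finrank) 0
  obtain ⟨β, hβ, hmin⟩ := H.exists_least_cone hr
  exact ⟨β, _, H.isDirectSumDecomp hr hβ hmin, H.exists_isHWVector hr hβ⟩

end Unbounded

/-- If the weight spaces along one coset of the lattice span the module, every weight space is
contained in one of them. -/
lemma exists_weightSpace_le_wt (hu : ∀ q : Fin n → ℤ, q ≠ 0 → pairC u₀ q ≠ 0)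
    (htop : ⨆ m, ρ.wt lam c m = ⊤) {μ : Fin n → ℂ} {c' : S →ₗ[ℂ] ℂ}
    (hne : ρ.weightSpace μ c' ≠ ⊥) : ∃ m, ρ.weightSpace μ c' ≤ ρ.wt lam c m := by
  let T := ρ.D u₀ 0 1
  let f (m : Fin n → ℤ) : ℂ := pairCC u₀ lam + pairC u₀ m
  have hf : ∀ m m', f m' = f m → m' = m := fun m m' h => by
    by_contra hmm
    refine hu (m' - m) (sub_ne_zero.2 hmm) ?_
    rw [pairC_sub_right, sub_eq_zero]
    exact add_left_cancel h
  have hwt : ∀ m, ρ.wt lam c m ≤ T.eigenspace (f m) := fun m x hx =>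
    Module.End.mem_eigenspace_iff.2 (D_zero_of_mem_wt hx u₀)
  have hμ : ρ.weightSpace μ c' ≤ T.eigenspace (pairCC u₀ μ) := fun x hx =>
    Module.End.mem_eigenspace_iff.2 (hx.1 u₀)
  have hdis := Module.End.eigenspaces_iSupIndep T
  obtain ⟨m, hm⟩ : ∃ m, f m = pairCC u₀ μ := by
    by_contra! hcon
    refine hne (le_bot_iff.1 (hμ.trans ?_))
    have hall : (⨆ b, ⨆ (_ : b ≠ pairCC u₀ μ), T.eigenspace b) = ⊤ :=
      top_le_iff.1 (htop ▸ iSup_le fun m => (hwt m).trans (le_iSup₂_of_le (f m) (hcon m) le_rfl))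
    have := hdis (pairCC u₀ μ)
    rw [hall, disjoint_top] at this
    exact this.le
  refine ⟨m, fun y hy => ?_⟩
  have hsplit : ρ.wt lam c m ⊔ ⨆ b, ⨆ (_ : b ≠ f m), T.eigenspace b = ⊤ := by
    refine top_le_iff.1 (htop ▸ iSup_le fun m' => ?_)
    by_cases h : m' = m
    · exact h ▸ le_sup_left
    · exact le_sup_of_le_right
        ((hwt m').trans (le_iSup₂_of_le (f m') (fun h' => h (hf m m' h')) le_rfl))
  obtain ⟨y₁, h₁, y₂, h₂, hyy⟩ := Submodule.mem_sup.1 (hsplit ▸ Submodule.mem_top : y ∈ _)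
  have hy₂ : y₂ ∈ T.eigenspace (f m) := by
    rw [← sub_eq_of_eq_add' hyy.symm]
    exact sub_mem (hm ▸ hμ hy) (hwt m h₁)
  have h0 : y₂ = 0 := Submodule.disjoint_def.1 (hdis (f m)) y₂ hy₂ h₂
  rw [← hyy, h0, add_zero]
  exact h₁

lemma iSup_wt_eq_top (hirr : ρ.IsIrreducible) (hne : ρ.weightSpace lam c ≠ ⊥) :
    ⨆ m, ρ.wt lam c m = ⊤ := by
  refine (hirr.2 _ ⟨fun u r b => ?_, fun s r b => ?_⟩).resolve_left fun h => hne ?_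
  · exact (iSup_le fun m x hx => Submodule.mem_iSup_of_mem (m + r) (D_mem_wt hx u r b rfl) :
      ⨆ m, ρ.wt lam c m ≤ (⨆ m, ρ.wt lam c m).comap (ρ.D u r b))
  · exact (iSup_le fun m x hx => Submodule.mem_iSup_of_mem (m + r) (E_mem_wt hx s r b rfl) :
      ⨆ m, ρ.wt lam c m ≤ (⨆ m, ρ.wt lam c m).comap (ρ.E s r b))
  · simpa [wt] using iSup_eq_bot.1 h 0

lemma exists_unbounded (hn : 2 ≤ n) (hu : ∀ q : Fin n → ℤ, q ≠ 0 → pairC u₀ q ≠ 0)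
    (hhc : ρ.HarishChandra) (hirr : ρ.IsIrreducible) (hnub : ¬ ρ.UniformlyBounded) :
    ∃ lam c, ρ.Unbounded lam c u₀ := by
  obtain ⟨lam, c, hne⟩ : ∃ lam c, ρ.weightSpace lam c ≠ ⊥ := by
    by_contra! hcon
    obtain ⟨x, hx⟩ := hirr.1
    have h := hhc.1
    simp only [IsWeightModule, hcon, iSup_bot] at h
    exact hx ((Submodule.mem_bot ℂ).1 (h ▸ Submodule.mem_top))
  refine ⟨lam, c, hn, hu, hirr, noInvariants_of_not_uniformlyBounded hirr hnub,
    fun m => hhc.2 _ _, ?_⟩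
  by_contra! hcon
  obtain ⟨N, hN⟩ := hcon
  refine hnub ⟨N, fun μ c' => ?_⟩
  by_cases h : ρ.weightSpace μ c' = ⊥
  · rw [h, rank_bot]
    exact zero_le
  · obtain ⟨m, hm⟩ := exists_weightSpace_le_wt hu (iSup_wt_eq_top hirr hne) h
    have : FiniteDimensional ℂ (ρ.wt lam c m) := hhc.2 _ _
    refine (Submodule.rank_mono hm).trans ?_
    rw [← Module.finrank_eq_rank]
    exact_mod_cast hN m

end Weights

end ExtWittRep

end LoopWitt

/-- For `n ≥ 2`, every irreducible Harish-Chandra `𝔏_{S,n}(B)`-module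
with non-uniformly bounded weight spaces is a highest weight module: there are
`β ∈ ℤⁿ`, a subgroup `K` with `ℤⁿ = K ⊕ ℤβ`, and a non-zero weight vector `z`
annihilated by the positive part `⊕_{d∈ℕ} (𝔏_{S,n}(B))_{K+dβ}` and generating `V`. -/
theorem stmt10 {n : ℕ} (hn : 2 ≤ n) {S B V : Type*}
    [AddCommGroup S] [Module ℂ S] [FiniteDimensional ℂ S]
    [CommRing B] [Algebra ℂ B] [Algebra.FiniteType ℂ B]
    [AddCommGroup V] [Module ℂ V]
    (ρ : ExtWittRep n S B V)
    (hhc : ρ.HarishChandra) (hirr : ρ.IsIrreducible) (hnub : ¬ ρ.UniformlyBounded) :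
    ∃ (β : Fin n → ℤ) (K : AddSubgroup (Fin n → ℤ)),
      IsDirectSumDecomp K β ∧ ∃ z : V, ρ.IsHWVector K β z := by
  obtain ⟨u₀, hu⟩ := LoopWitt.exists_generic n
  obtain ⟨lam, c, H⟩ := ExtWittRep.exists_unbounded hn hu hhc hirr hnub
  exact H.exists_isDirectSumDecomp
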